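/- Let 𝒫 be a partition of a finite abelian group G having the singleton {0} as one of its blocks, and let n ≥ 1. Then the dual of the induced symmetrized partition 𝒫ⁿ_sym of Gⁿ equals the symmetrized partition induced by the dual: (𝒫ⁿ_sym)̂ = (𝒫̂)ⁿ_sym (as partitions of Ĝⁿ, where the zero element of Ĝ is the principal character ε). Consequently, if 𝒫 is Fourier-reflexive, then 𝒫ⁿ_sym is Fourier-reflexive. -/

import Mathlib

open Finset
open scoped Classical

variable {G : Type*} [AddCommGroup G] [Fintype G]

/-- The sum `Σ_{g ∈ P_c} χ(g)` of the character `χ` over the block of the partition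
(setoid) `P` of `G` indexed by `c`. -/
noncomputable def blockSum (P : Setoid G) (χ : AddChar G ℂ) (c : Quotient P) : ℂ :=
  ∑ g : G, if Quotient.mk P g = c then χ g else 0

/-- The dual partition `P̂` of the character group `Ĝ`:  `χ ∼ χ'` iff the sums of `χ` and of
`χ'` over each block of `P` agree. -/
noncomputable def dualSetoid (P : Setoid G) : Setoid (AddChar G ℂ) :=
  Setoid.ker (blockSum P)

/-- The sum `Σ_{χ ∈ Q_c} χ(g)` over the block of the dual partition indexed by `c`. -/
noncomputable def dualBlockSum (P : Setoid G) (g : G) (c : Quotient (dualSetoid P)) : ℂ :=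
  ∑ᶠ χ : AddChar G ℂ, if Quotient.mk (dualSetoid P) χ = c then χ g else 0

/-- The bidual partition `P̂̂`, viewed as a partition of `G` by identifying the double
character group with `G` via `g(χ) = χ(g)`. -/
noncomputable def bidualSetoid (P : Setoid G) : Setoid G :=
  Setoid.ker (dualBlockSum P)

variable {ι : Type*} [Fintype ι] [DecidableEq ι]
  {H : ι → Type*} [∀ i, AddCommGroup (H i)] [∀ i, Fintype (H i)]

/-- The `i`-th component of a character of a product group, under the canonical
identification of the character group of a product with the product of the character
groups. -/
noncomputable def comp1 (χ : AddChar (∀ i, H i) ℂ) (i : ι) : AddChar (H i) ℂ :=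
  χ.compAddMonoidHom (AddMonoidHom.single H i)

/-- The symmetrized partition `Pⁿ_sym` of `Gⁿ` induced by a partition `P` of `G`:
two tuples are equivalent iff they have the same composition vector, i.e. the same
number of entries in each block of `P`. -/
noncomputable def symSetoid {A : Type*} (P : Setoid A) (n : ℕ) : Setoid (Fin n → A) :=
  Setoid.ker fun g (c : Quotient P) =>
    (Finset.univ.filter fun t : Fin n => Quotient.mk P (g t) = c).card

/-!
Encode the block sums of a function on `A` as a linear form with one variable `X_c` per block `c`.
The block sums of `(a₁, …, aₙ) ↦ f₁(a₁) ⋯ fₙ(aₙ)` over the symmetrized partition are then the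
coefficients of the product of the linear forms of `f₁, …, fₙ`. If some variable has coefficient `1`
in all these forms, unique factorization recovers the multiset of factors from the product, and this
multiset is a composition vector with respect to the dual partition. For characters of `G` the block
`{0}` provides such a variable. Dually, the principal character is always a block of the dual
partition, so the same argument applies to the evaluation pairing read in the other direction.
-/

section LinearForms

variable {σ R : Type*} [CommRing R]

theorem irreducible_sumSMulX_of_apply_eq_one [IsDomain R] {v : σ →₀ R} {i : σ} (hv : v i = 1) :
    Irreducible (MvPolynomial.sumSMulX v) :=
  MvPolynomial.irreducible_sumSMulX v ⟨i, by simp [hv]⟩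
    fun _ hr => isUnit_of_dvd_one (hv ▸ hr i)

theorem eq_of_associated_sumSMulX [IsReduced R] {v w : σ →₀ R} {i : σ} (hv : v i = 1)
    (hw : w i = 1) (h : Associated (MvPolynomial.sumSMulX v) (MvPolynomial.sumSMulX w)) :
    v = w := by
  obtain ⟨u, hu⟩ := h
  obtain ⟨r, -, hr⟩ := MvPolynomial.isUnit_iff_eq_C_of_isReduced.mp u.isUnit
  have apply_mul : ∀ j, v j * r = w j := fun j => by
    rw [← MvPolynomial.coeff_sumSMulX v, ← MvPolynomial.coeff_sumSMulX w, ← hu, hr,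
      mul_comm (MvPolynomial.sumSMulX v), MvPolynomial.coeff_C_mul, mul_comm]
  have r_eq_one : r = 1 := by simpa only [hv, hw, one_mul] using apply_mul i
  ext j
  simpa only [r_eq_one, mul_one] using apply_mul j

theorem eq_of_prod_map_sumSMulX_eq [IsDomain R] [UniqueFactorizationMonoid R] {i : σ}
    {S T : Multiset (σ →₀ R)} (hS : ∀ v ∈ S, v i = 1) (hT : ∀ v ∈ T, v i = 1)
    (h : (S.map MvPolynomial.sumSMulX).prod = (T.map MvPolynomial.sumSMulX).prod) : S = T := by
  have irreducible_of_mem : ∀ U : Multiset (σ →₀ R), (∀ v ∈ U, v i = 1) →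
      ∀ p ∈ U.map MvPolynomial.sumSMulX, Irreducible p := fun U hU => by
    simpa only [Multiset.forall_mem_map_iff] using
      fun v hv => irreducible_sumSMulX_of_apply_eq_one (hU v hv)
  have factors_rel := UniqueFactorizationMonoid.factors_unique (irreducible_of_mem S hS)
    (irreducible_of_mem T hT) (Associated.of_eq h)
  rw [Multiset.rel_map] at factors_rel
  exact Multiset.rel_eq.mp <| factors_rel.mono fun v hv w hw =>
    eq_of_associated_sumSMulX (hS v hv) (hT w hw)

end LinearForms

section BlockSums

variable {A M : Type*} [Fintype A] [AddCommMonoid M]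

/-- The family of sums of `f` over the blocks of the partition `K`. It is finitely supported so that
it can serve as the coefficient vector of a linear form in variables indexed by the blocks. -/
noncomputable def blockSums (K : Setoid A) (f : A → M) : Quotient K →₀ M :=
  ∑ a, Finsupp.single (Quotient.mk K a) (f a)

theorem blockSums_apply (K : Setoid A) (f : A → M) (c : Quotient K) :
    blockSums K f c = ∑ a, if Quotient.mk K a = c then f a else 0 := by
  simp only [blockSums, Finsupp.finsetSum_apply, Finsupp.single_apply]

theorem blockSums_eq_iff {K : Setoid A} {f f' : A → M} :
    blockSums K f = blockSums K f' ↔ ∀ b, ∑ a with K a b, f a = ∑ a with K a b, f' a := by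
  simp only [DFunLike.ext_iff, Quotient.forall, blockSums_apply, Finset.sum_filter, Quotient.eq]

theorem sum_blockSums (K : Setoid A) (f : A → M) : ∑ c, blockSums K f c = ∑ a, f a := by
  simp only [blockSums_apply]
  rw [Finset.sum_comm]
  simp only [Finset.sum_ite_eq, Finset.mem_univ, if_true]

theorem blockSums_mk_of_forall_eq {K : Setoid A} {b : A} (hb : ∀ a, K a b → a = b) (f : A → M) :
    blockSums K f (Quotient.mk K b) = f b := by
  have mk_eq_iff : ∀ a, Quotient.mk K a = Quotient.mk K b ↔ a = b := fun a =>
    ⟨fun h => hb a (Quotient.exact h), fun h => h ▸ rfl⟩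
  simp only [blockSums_apply, mk_eq_iff, Finset.sum_ite_eq', Finset.mem_univ, if_true]

end BlockSums

section CompositionVector

variable {A : Type*} {n : ℕ}

/-- The composition vector `comp_K(a)` of a tuple `a`: its value at a block of `K` is the number of
entries of `a` in this block. -/
noncomputable def compositionVector (K : Setoid A) (a : Fin n → A) : Quotient K →₀ ℕ :=
  ∑ t, Finsupp.single (Quotient.mk K (a t)) 1

theorem symSetoid_rel {K : Setoid A} {a b : Fin n → A} :
    symSetoid K n a b ↔ compositionVector K a = compositionVector K b := by
  have apply_eq_card : ∀ (x : Fin n → A) (c : Quotient K),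
      compositionVector K x c = #{t | Quotient.mk K (x t) = c} := fun x c => by
    simp only [compositionVector, Finsupp.finsetSum_apply, Finsupp.single_apply,
      Finset.card_filter]
  rw [symSetoid, Setoid.ker_def, funext_iff, DFunLike.ext_iff]
  simp only [apply_eq_card]

theorem toFinsupp_map_mk (K : Setoid A) (a : Fin n → A) :
    Multiset.toFinsupp (univ.val.map fun t => Quotient.mk K (a t)) = compositionVector K a := by
  have map_eq_sum : univ.val.map (fun t => Quotient.mk K (a t)) = ∑ t, {Quotient.mk K (a t)} := by
    rw [← Multiset.sum_map_singleton (univ.val.map _), Multiset.map_map]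
    rfl
  simp only [map_eq_sum, map_sum, Multiset.toFinsupp_singleton, compositionVector]

theorem symSetoid_ker_rel {B : Type*} {f : A → B} {a b : Fin n → A} :
    symSetoid (Setoid.ker f) n a b ↔
      univ.val.map (fun t => f (a t)) = univ.val.map fun t => f (b t) := by
  rw [symSetoid_rel, ← toFinsupp_map_mk, ← toFinsupp_map_mk, Multiset.toFinsupp.injective.eq_iff,
    ← (Multiset.map_injective (Setoid.kerLift_injective f)).eq_iff, Multiset.map_map,
    Multiset.map_map]
  rfl

end CompositionVector

section GeneratingPolynomial

variable {A R : Type*} [Fintype A] [CommRing R] {n : ℕ}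

theorem sumSMulX_blockSums (K : Setoid A) (f : A → R) :
    MvPolynomial.sumSMulX (blockSums K f) =
      ∑ a, MvPolynomial.monomial (Finsupp.single (Quotient.mk K a) 1) (f a) := by
  simp only [blockSums, MvPolynomial.sumSMulX, map_sum, Finsupp.linearCombination_single,
    MvPolynomial.X, MvPolynomial.smul_monomial, smul_eq_mul, mul_one]

theorem prod_sumSMulX_blockSums (K : Setoid A) (f : Fin n → A → R) :
    ∏ t, MvPolynomial.sumSMulX (blockSums K (f t)) =
      ∑ a : Fin n → A, MvPolynomial.monomial (compositionVector K a) (∏ t, f t (a t)) := by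
  simp only [sumSMulX_blockSums, Finset.prod_univ_sum, Fintype.piFinset_univ, compositionVector,
    MvPolynomial.monomial_sum_prod]

theorem coeff_prod_sumSMulX_blockSums (K : Setoid A) (f : Fin n → A → R) (m : Quotient K →₀ ℕ) :
    (∏ t, MvPolynomial.sumSMulX (blockSums K (f t))).coeff m =
      ∑ a : Fin n → A with compositionVector K a = m, ∏ t, f t (a t) := by
  simp only [prod_sumSMulX_blockSums, MvPolynomial.coeff_sum, MvPolynomial.coeff_monomial,
    Finset.sum_filter]

theorem blockSums_symSetoid_eq_iff_prod_sumSMulX_eq {K : Setoid A} {f f' : Fin n → A → R} :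
    blockSums (symSetoid K n) (fun a => ∏ t, f t (a t)) =
        blockSums (symSetoid K n) (fun a => ∏ t, f' t (a t)) ↔
      ∏ t, MvPolynomial.sumSMulX (blockSums K (f t)) =
        ∏ t, MvPolynomial.sumSMulX (blockSums K (f' t)) := by
  simp only [blockSums_eq_iff, symSetoid_rel, MvPolynomial.ext_iff, coeff_prod_sumSMulX_blockSums]
  refine ⟨fun h m => ?_, fun h b => h _⟩
  by_cases hm : ∃ b : Fin n → A, compositionVector K b = m
  · obtain ⟨b, rfl⟩ := hm
    exact h b
  · rw [not_exists] at hm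
    simp only [hm, Finset.filter_false, Finset.sum_empty]

theorem blockSums_symSetoid_eq_iff [IsDomain R] [UniqueFactorizationMonoid R] {K : Setoid A}
    {f f' : Fin n → A → R} {c : Quotient K} (hf : ∀ t, blockSums K (f t) c = 1)
    (hf' : ∀ t, blockSums K (f' t) c = 1) :
    blockSums (symSetoid K n) (fun a => ∏ t, f t (a t)) =
        blockSums (symSetoid K n) (fun a => ∏ t, f' t (a t)) ↔
      univ.val.map (fun t => blockSums K (f t)) = univ.val.map fun t => blockSums K (f' t) := by
  have prod_eq : ∀ g : Fin n → A → R,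
      ∏ t, MvPolynomial.sumSMulX (blockSums K (g t)) =
        ((univ.val.map fun t => blockSums K (g t)).map MvPolynomial.sumSMulX).prod := fun g => by
    rw [Multiset.map_map]
    rfl
  rw [blockSums_symSetoid_eq_iff_prod_sumSMulX_eq, prod_eq, prod_eq]
  refine ⟨eq_of_prod_map_sumSMulX_eq (i := c) ?_ ?_, fun h => h ▸ rfl⟩
  · simpa using hf
  · simpa using hf'

end GeneratingPolynomial

section PairingDual

variable {A B R : Type*} [Fintype A]

/-- The dual of the partition `K` of `A` with respect to a pairing `φ` of `A` and `B`: elements of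
`B` are equivalent if pairing with them gives the same sums over all blocks of `K`. With the
evaluation pairing this specializes both to `dualSetoid` and, in the other direction, to
`bidualSetoid`. -/
noncomputable def pairingDual [AddCommMonoid R] (φ : A → B → R) (K : Setoid A) : Setoid B :=
  Setoid.ker fun b => blockSums K fun a => φ a b

theorem pairingDual_rel [AddCommMonoid R] {φ : A → B → R} {K : Setoid A} {b b' : B} :
    pairingDual φ K b b' ↔
      blockSums K (fun a => φ a b) = blockSums K fun a => φ a b' :=
  Iff.rfl

theorem pairingDual_comap_equiv [AddCommMonoid R] {A' : Type*} [Fintype A'] (e : A ≃ A')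
    (φ : A' → B → R) (K : Setoid A') :
    pairingDual (fun a b => φ (e a) b) (K.comap e) = pairingDual φ K := by
  ext b b'
  simp only [pairingDual_rel, blockSums_eq_iff, e.forall_congr_left,
    Finset.sum_filter, Setoid.comap_rel, Equiv.apply_symm_apply]
  refine forall_congr' fun a => ?_
  rw [e.sum_comp fun x => if K x a then φ x b else 0,
    e.sum_comp fun x => if K x a then φ x b' else 0]

theorem pairingDual_symSetoid [CommRing R] [IsDomain R] [UniqueFactorizationMonoid R]
    {φ : A → B → R} {K : Setoid A} {c : Quotient K}
    (hc : ∀ b, blockSums K (fun a => φ a b) c = 1) (n : ℕ) :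
    pairingDual (fun (a : Fin n → A) (b : Fin n → B) => ∏ t, φ (a t) (b t)) (symSetoid K n) =
      symSetoid (pairingDual φ K) n := by
  ext b b'
  rw [pairingDual_rel, pairingDual, symSetoid_ker_rel]
  exact blockSums_symSetoid_eq_iff (fun t => hc (b t)) fun t => hc (b' t)

end PairingDual

section Characters

variable {E : ι → Type*} [∀ i, AddCommGroup (E i)]

theorem prod_comp1_apply (χ : AddChar (∀ i, E i) ℂ) (x : ∀ i, E i) :
    ∏ i, comp1 χ i (x i) = χ x := by
  conv_rhs => rw [← Finset.univ_sum_single x]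
  exact (map_prod χ.toMonoidHom (fun i => Multiplicative.ofAdd (Pi.single i (x i))) univ).symm

/-- The canonical identification of the character group of a product with the product of the
character groups, sending a character to the family of its components. -/
noncomputable def comp1Equiv : AddChar (∀ i, E i) ℂ ≃ ∀ i, AddChar (E i) ℂ where
  toFun := comp1
  invFun ψ := ∏ i, (ψ i).compAddMonoidHom (Pi.evalAddMonoidHom E i)
  left_inv χ := by
    ext x
    simp only [AddChar.prod_apply, AddChar.compAddMonoidHom_apply, Pi.evalAddMonoidHom_apply,
      prod_comp1_apply]
  right_inv ψ := by
    ext i x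
    simp only [comp1, AddChar.compAddMonoidHom_apply, AddChar.prod_apply,
      AddMonoidHom.single_apply, Pi.evalAddMonoidHom_apply]
    rw [Finset.prod_eq_single i (fun j _ hj => by simp [hj]) (by simp), Pi.single_eq_same]

theorem dualSetoid_eq_pairingDual (P : Setoid G) :
    dualSetoid P = pairingDual (fun g (χ : AddChar G ℂ) => χ g) P := by
  ext χ χ'
  rw [dualSetoid, Setoid.ker_def, pairingDual_rel]
  simp only [funext_iff, DFunLike.ext_iff, blockSums_apply, blockSum]

theorem bidualSetoid_eq_pairingDual (P : Setoid G) :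
    bidualSetoid P = pairingDual (fun (χ : AddChar G ℂ) g => χ g) (dualSetoid P) := by
  ext g g'
  rw [bidualSetoid, Setoid.ker_def, pairingDual_rel]
  simp only [funext_iff, DFunLike.ext_iff, blockSums_apply, dualBlockSum,
    finsum_eq_sum_of_fintype]

theorem eq_zero_of_dualSetoid_rel_zero {P : Setoid G} {χ : AddChar G ℂ} (h : dualSetoid P χ 0) :
    χ = 0 := by
  rw [dualSetoid_eq_pairingDual, pairingDual_rel] at h
  have sum_eq : ∑ g, χ g = ∑ g, (0 : AddChar G ℂ) g := by
    rw [← sum_blockSums P, h, sum_blockSums]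
  by_contra hχ
  simp [AddChar.sum_eq_ite, hχ, eq_comm] at sum_eq

theorem dualSetoid_symSetoid {P : Setoid G} (h0 : ∀ g, P g 0 → g = 0) (n : ℕ) :
    dualSetoid (symSetoid P n) = (symSetoid (dualSetoid P) n).comap comp1Equiv := by
  have blockSums_zero : ∀ χ : AddChar G ℂ, blockSums P χ (Quotient.mk P 0) = 1 := fun χ => by
    rw [blockSums_mk_of_forall_eq h0, AddChar.map_zero_eq_one]
  calc dualSetoid (symSetoid P n)
      = pairingDual (fun x χ => ∏ t, comp1 χ t (x t)) (symSetoid P n) := by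
        simp only [dualSetoid_eq_pairingDual, prod_comp1_apply]
    _ = (pairingDual (fun x ψ => ∏ t, ψ t (x t)) (symSetoid P n)).comap comp1Equiv := rfl
    _ = (symSetoid (dualSetoid P) n).comap comp1Equiv := by
        rw [pairingDual_symSetoid blockSums_zero, dualSetoid_eq_pairingDual P]

theorem bidualSetoid_symSetoid {P : Setoid G} (h0 : ∀ g, P g 0 → g = 0) (n : ℕ) :
    bidualSetoid (symSetoid P n) = symSetoid (bidualSetoid P) n := by
  have blockSums_zero : ∀ g : G,
      blockSums (dualSetoid P) (fun χ => χ g) (Quotient.mk (dualSetoid P) 0) = 1 := fun g => by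
    rw [blockSums_mk_of_forall_eq fun _ => eq_zero_of_dualSetoid_rel_zero, AddChar.zero_apply]
  calc bidualSetoid (symSetoid P n)
      = pairingDual (fun χ x => ∏ t, comp1 χ t (x t))
          ((symSetoid (dualSetoid P) n).comap comp1Equiv) := by
        simp only [bidualSetoid_eq_pairingDual, dualSetoid_symSetoid h0, prod_comp1_apply]
    _ = pairingDual (fun ψ x => ∏ t, ψ t (x t)) (symSetoid (dualSetoid P) n) := by
        rw [← pairingDual_comap_equiv comp1Equiv]
        rfl
    _ = symSetoid (bidualSetoid P) n := by
        rw [pairingDual_symSetoid blockSums_zero, bidualSetoid_eq_pairingDual]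

end Characters

/-- If the partition `P` of `G` has `{0}` as a block, then the dual of the induced
symmetrized partition `Pⁿ_sym` of `Gⁿ` is the symmetrized partition `(P̂)ⁿ_sym` induced by
the dual partition (under the canonical identification of the character group of `Gⁿ`
with `Ĝⁿ`); consequently, if `P` is Fourier-reflexive, then so is `Pⁿ_sym`. -/
theorem dual_symSetoid (P : Setoid G) (n : ℕ) (hn : 1 ≤ n)
    (h0 : ∀ g : G, P.r g 0 → g = 0) :
    (∀ χ χ' : AddChar (Fin n → G) ℂ,
      (dualSetoid (symSetoid P n)).r χ χ' ↔
        (symSetoid (dualSetoid P) n).r (fun t => comp1 χ t) (fun t => comp1 χ' t)) ∧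
    (bidualSetoid P = P → bidualSetoid (symSetoid P n) = symSetoid P n) := by
  refine ⟨fun χ χ' => ?_, fun h => ?_⟩
  · rw [dualSetoid_symSetoid h0]
    rfl
  · rw [bidualSetoid_symSetoid h0, h]
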